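/- (No QEI for the free field with polynomial factor of degree at least 2.) Let μ > 0, let P : ℝ → ℝ be a polynomial of degree at least 2 with positive leading coefficient, and set F_P(θ) = P(cosh θ). Then for every real-valued Schwartz function g on ℝ with g not identically zero, there exists a sequence (φ_j) of smooth compactly supported functions φ_j : ℝ → ℂ with ‖φ_j‖_{L²(ℝ)} = 1 such that Q(φ_j) → −∞ as j → ∞. -/

import Mathlib

/-!
The energy form is made negative by antisymmetric superpositions of two sharply peaked wave
packets at opposite rapidities `±R`. Let `φ = p - q` with `p`, `q` equal nonnegative bumps of
radius `δ` around `R` and `-R`. Since `ω` is even, all energies in the support of `φ` differ by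
`O(e^R δ)` (`abs_cosh_sub_cosh_le`); choosing `δ = ε e^{-R}` keeps `Re G(ω(θ) - ω(η))` above
`G(0)/2 > 0` (`exists_re_fourierG_ge`).

On the diagonal blocks (`θ`, `η` near the same peak) the kernel is at most a constant times
`cosh² R`, hence `O(e^{2R})`. On the off-diagonal blocks `θ - η ≈ ±2R`, so
`P(cosh(θ - η))` is at least a multiple of `cosh²(2R)`, and the kernel is at least a multiple of
`e^{4R}`; there `conj φ(θ) φ(η)` is negative. Thus `integral_kernel_le` bounds the form by
`2 (∫ p)² (a e^{2R} - b e^{4R})` with `b > 0`. For normalized `φ` the mass satisfies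
`(∫ p)² ≥ δ/4 = ε e^{-R}/4` (`exists_bump_pair`), so the form is at most a multiple of
`a e^R - b e^{3R}`, which tends to `-∞` as `R → ∞`.
-/

open MeasureTheory

/-- Fourier transform of `g²`: `G(k) = ∫ g(t)² e^{ikt} dt`. -/
noncomputable def fourierG (g : ℝ → ℝ) (k : ℝ) : ℂ :=
  ∫ t : ℝ, ((g t : ℂ))^2 * Complex.exp (Complex.I * (k : ℂ) * (t : ℂ))

/-- One-particle energy density quadratic form
`Q(φ) = (μ²/(2π)) ∫∫ cosh²((θ+η)/2) F_P(θ−η) G(ω(θ)−ω(η)) conj(φ(θ)) φ(η) dθ dη`. -/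
noncomputable def Qform (μ : ℝ) (FP : ℝ → ℝ) (g : ℝ → ℝ) (φ : ℝ → ℂ) : ℂ :=
  ((μ ^ 2 / (2 * Real.pi) : ℝ) : ℂ) *
    ∫ θ : ℝ, ∫ η : ℝ,
      (((Real.cosh ((θ + η) / 2)) ^ 2 * FP (θ - η) : ℝ) : ℂ) *
        fourierG g (μ * Real.cosh θ - μ * Real.cosh η) *
        (starRingEnd ℂ) (φ θ) * φ η

/-! ### The Fourier transform of `g²` -/

lemma integrable_sq_schwartz (g : SchwartzMap ℝ ℝ) : Integrable (fun t => g t ^ 2) := by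
  have h := (g.memLp 2 volume)
  exact h.integrable_sq

lemma fourierG_zero_pos (g : SchwartzMap ℝ ℝ) (hg : ⇑g ≠ 0) : 0 < ∫ t, g t ^ 2 := by
  obtain ⟨x, hx⟩ := Function.ne_iff.mp hg
  refine integral_pos_of_integrable_nonneg_nonzero (x := x) (by fun_prop)
    (integrable_sq_schwartz g) (fun t => sq_nonneg _) ?_
  simpa using hx

lemma norm_integrand (g : SchwartzMap ℝ ℝ) (k t : ℝ) :
    ‖((g t : ℂ)) ^ 2 * Complex.exp (Complex.I * (k : ℂ) * (t : ℂ))‖ = g t ^ 2 := by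
  have : Complex.I * (k : ℂ) * (t : ℂ) = ((k * t : ℝ) : ℂ) * Complex.I := by
    push_cast; ring
  rw [norm_mul, this, Complex.norm_exp_ofReal_mul_I]
  simp

lemma continuous_fourierG (g : SchwartzMap ℝ ℝ) : Continuous (fourierG g) := by
  unfold fourierG
  refine continuous_of_dominated (bound := fun t => g t ^ 2) ?_ ?_ (integrable_sq_schwartz g) ?_
  · intro k
    exact Continuous.aestronglyMeasurable (by fun_prop)
  · intro k
    exact Filter.Eventually.of_forall fun t => (norm_integrand g k t).le
  · exact Filter.Eventually.of_forall fun t => by fun_prop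

lemma norm_fourierG_le (g : SchwartzMap ℝ ℝ) (k : ℝ) : ‖fourierG g k‖ ≤ ∫ t, g t ^ 2 := by
  unfold fourierG
  refine (norm_integral_le_integral_norm _).trans_eq ?_
  simp_rw [norm_integrand]

lemma fourierG_zero (g : SchwartzMap ℝ ℝ) : fourierG g 0 = ((∫ t, g t ^ 2 : ℝ) : ℂ) := by
  unfold fourierG
  rw [← integral_complex_ofReal]
  simp

/-- By continuity, `Re G` stays above half its (positive) peak value `G(0)` near `0`. -/
lemma exists_re_fourierG_ge (g : SchwartzMap ℝ ℝ) (hg : ⇑g ≠ 0) :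
    ∃ κ > 0, ∀ k : ℝ, |k| < κ → (∫ t, g t ^ 2) / 2 ≤ (fourierG g k).re := by
  have hpos := fourierG_zero_pos g hg
  have hc : Continuous fun k => (fourierG g k).re :=
    Complex.continuous_re.comp (continuous_fourierG g)
  have h0 : (∫ t, g t ^ 2) / 2 < (fourierG g 0).re := by
    rw [fourierG_zero, Complex.ofReal_re]; linarith
  obtain ⟨κ, hκ, h⟩ := Metric.eventually_nhds_iff.mp (hc.continuousAt.eventually_const_lt h0)
  exact ⟨κ, hκ, fun k hk => (h (by simpa using hk)).le⟩

/-! ### Quadratic forms with continuous kernels -/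

/-- If a continuous kernel is at most `A` on the diagonal blocks and at least `B` on the
off-diagonal blocks of a pair of bumps `p`, `q` of equal mass, then its quadratic form at the
difference `p - q` is at most `2 (∫ p)² (A - B)`. -/
lemma integral_kernel_le {K : ℝ × ℝ → ℝ} (hK : Continuous K) {p q : ℝ → ℝ}
    (hp : Continuous p) (hq : Continuous q) (hps : HasCompactSupport p)
    (hqs : HasCompactSupport q) (hp0 : ∀ x, 0 ≤ p x) (hq0 : ∀ x, 0 ≤ q x)
    (hpq : ∫ x, q x = ∫ x, p x) {A B : ℝ}
    (hpp : ∀ x y, p x ≠ 0 → p y ≠ 0 → K (x, y) ≤ A)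
    (hqq : ∀ x y, q x ≠ 0 → q y ≠ 0 → K (x, y) ≤ A)
    (hpq' : ∀ x y, p x ≠ 0 → q y ≠ 0 → B ≤ K (x, y))
    (hqp' : ∀ x y, q x ≠ 0 → p y ≠ 0 → B ≤ K (x, y)) :
    ∫ z : ℝ × ℝ, K z * (p z.1 - q z.1) * (p z.2 - q z.2) ≤ 2 * (∫ x, p x) ^ 2 * (A - B) := by
  have ip : Integrable p := hp.integrable_of_hasCompactSupport hps
  have iq : Integrable q := hq.integrable_of_hasCompactSupport hqs
  have ipp := ip.mul_prod ip
  have ipq := ip.mul_prod iq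
  have iqp := iq.mul_prod ip
  have iqq := iq.mul_prod iq
  rw [← Measure.volume_eq_prod] at ipp ipq iqp iqq
  have hle : ∀ {a b c A : ℝ}, 0 ≤ b → 0 ≤ c → (b ≠ 0 → c ≠ 0 → a ≤ A) →
      a * (b * c) ≤ A * (b * c) := by
    intro a b c A hb hc h
    by_cases hb' : b = 0
    · simp [hb']
    by_cases hc' : c = 0
    · simp [hc']
    exact mul_le_mul_of_nonneg_right (h hb' hc') (mul_nonneg hb hc)
  have hge : ∀ {a b c B : ℝ}, 0 ≤ b → 0 ≤ c → (b ≠ 0 → c ≠ 0 → B ≤ a) →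
      B * (b * c) ≤ a * (b * c) := by
    intro a b c B hb hc h
    by_cases hb' : b = 0
    · simp [hb']
    by_cases hc' : c = 0
    · simp [hc']
    exact mul_le_mul_of_nonneg_right (h hb' hc') (mul_nonneg hb hc)
  have hcs : HasCompactSupport fun z : ℝ × ℝ => K z * (p z.1 - q z.1) * (p z.2 - q z.2) := by
    refine HasCompactSupport.intro
      ((hps.isCompact.union hqs.isCompact).prod (hps.isCompact.union hqs.isCompact)) ?_
    intro z hz
    simp only [Set.mem_prod, Set.mem_union, not_and_or, not_or] at hz
    rcases hz with ⟨h1, h2⟩ | ⟨h1, h2⟩ <;>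
      simp [image_eq_zero_of_notMem_tsupport h1, image_eq_zero_of_notMem_tsupport h2]
  have hint : Integrable fun z : ℝ × ℝ => K z * (p z.1 - q z.1) * (p z.2 - q z.2) :=
    Continuous.integrable_of_hasCompactSupport (by fun_prop) hcs
  have iA : Integrable fun z : ℝ × ℝ => A * (p z.1 * p z.2) + A * (q z.1 * q z.2) :=
    (ipp.const_mul A).add (iqq.const_mul A)
  have iB : Integrable fun z : ℝ × ℝ => B * (p z.1 * q z.2) + B * (q z.1 * p z.2) :=
    (ipq.const_mul B).add (iqp.const_mul B)
  calc ∫ z : ℝ × ℝ, K z * (p z.1 - q z.1) * (p z.2 - q z.2)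
      ≤ ∫ z : ℝ × ℝ, ((A * (p z.1 * p z.2) + A * (q z.1 * q z.2))
          - (B * (p z.1 * q z.2) + B * (q z.1 * p z.2))) := by
        refine integral_mono hint (iA.sub iB) ?_
        rintro ⟨x, y⟩
        have h1 := hle (hp0 x) (hp0 y) (hpp x y)
        have h2 := hle (hq0 x) (hq0 y) (hqq x y)
        have h3 := hge (hp0 x) (hq0 y) (hpq' x y)
        have h4 := hge (hq0 x) (hp0 y) (hqp' x y)
        simp only
        linarith
    _ = 2 * (∫ x, p x) ^ 2 * (A - B) := by
        rw [integral_sub iA iB,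
          integral_add (ipp.const_mul A) (iqq.const_mul A),
          integral_add (ipq.const_mul B) (iqp.const_mul B)]
        simp only [integral_const_mul, Measure.volume_eq_prod, integral_prod_mul, hpq]
        ring

/-- For a real wave function the real part of the quadratic form is the integral over the plane
of a continuous real kernel. -/
lemma Qform_re (μ : ℝ) {F : ℝ → ℝ} (hF : Continuous F) (g : SchwartzMap ℝ ℝ) {u : ℝ → ℝ}
    (hu : Continuous u) (hus : HasCompactSupport u) :
    (Qform μ F g (fun θ => (u θ : ℂ))).re = μ ^ 2 / (2 * Real.pi) *
      ∫ z : ℝ × ℝ, (Real.cosh ((z.1 + z.2) / 2) ^ 2 * F (z.1 - z.2) *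
        (fourierG g (μ * Real.cosh z.1 - μ * Real.cosh z.2)).re) * u z.1 * u z.2 := by
  have hG := continuous_fourierG g
  set H : ℝ × ℝ → ℂ := fun z =>
    (((Real.cosh ((z.1 + z.2) / 2)) ^ 2 * F (z.1 - z.2) : ℝ) : ℂ) *
        fourierG g (μ * Real.cosh z.1 - μ * Real.cosh z.2) *
        (starRingEnd ℂ) (u z.1 : ℂ) * (u z.2 : ℂ) with hH
  have hcs : HasCompactSupport H := by
    refine HasCompactSupport.intro (hus.isCompact.prod hus.isCompact) ?_
    intro z hz
    simp only [Set.mem_prod, not_and_or] at hz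
    rcases hz with h1 | h1 <;> simp [hH, image_eq_zero_of_notMem_tsupport h1]
  have hint : Integrable H := by
    refine Continuous.integrable_of_hasCompactSupport ?_ hcs
    simp only [hH, Complex.conj_ofReal]
    fun_prop
  have h1 : Qform μ F g (fun θ => (u θ : ℂ)) = ((μ ^ 2 / (2 * Real.pi) : ℝ) : ℂ) * ∫ z, H z := by
    unfold Qform
    congr 1
    rw [Measure.volume_eq_prod] at hint ⊢
    rw [integral_prod _ hint]
  rw [h1, Complex.re_ofReal_mul]
  congr 1
  have h2 := (Complex.reCLM.integral_comp_comm hint).symm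
  simp only [Complex.reCLM_apply] at h2
  rw [h2]
  congr 1
  ext z
  simp only [hH, Complex.conj_ofReal]
  rw [Complex.re_mul_ofReal, Complex.re_mul_ofReal, Complex.re_ofReal_mul]

/-! ### Elementary estimates -/

/-- Two rapidities with modulus within `δ` of `R` have energies differing by `O(e^R δ)`. -/
lemma abs_cosh_sub_cosh_le {R δ x y : ℝ} (hδ : 0 < δ) (hδ1 : δ ≤ 1) (hδR : δ ≤ R)
    (hx1 : R - δ ≤ |x|) (hx2 : |x| ≤ R + δ) (hy1 : R - δ ≤ |y|) (hy2 : |y| ≤ R + δ) :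
    |Real.cosh x - Real.cosh y| ≤ 2 * Real.exp R * δ := by
  have mono : ∀ {a b : ℝ}, 0 ≤ a → a ≤ b → Real.cosh a ≤ Real.cosh b := by
    intro a b ha hab
    rw [Real.cosh_le_cosh, abs_of_nonneg ha, abs_of_nonneg (ha.trans hab)]
    exact hab
  have hR : 0 ≤ R - δ := by linarith
  have a1 := mono hR hx1
  have a2 := mono (abs_nonneg x) hx2
  have a3 := mono hR hy1
  have a4 := mono (abs_nonneg y) hy2
  rw [Real.cosh_abs] at a1 a2 a3 a4
  have hdiff : Real.cosh (R + δ) - Real.cosh (R - δ) = 2 * Real.sinh R * Real.sinh δ := by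
    rw [Real.cosh_add, Real.cosh_sub]; ring
  have e1 := Real.abs_exp_sub_one_le (x := δ) (by rw [abs_of_pos hδ]; exact hδ1)
  have e2 := Real.abs_exp_sub_one_le (x := -δ) (by rw [abs_neg, abs_of_pos hδ]; exact hδ1)
  rw [abs_of_pos hδ] at e1
  rw [abs_neg, abs_of_pos hδ] at e2
  have hs : Real.sinh δ ≤ 2 * δ := by
    rw [Real.sinh_eq]
    have := (abs_le.mp e1).2
    have := (abs_le.mp e2).1
    linarith
  have hs0 : 0 ≤ Real.sinh δ := Real.sinh_nonneg_iff.mpr hδ.le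
  have hR2 : 2 * Real.sinh R ≤ Real.exp R := by
    rw [Real.sinh_eq]
    have := Real.exp_pos (-R)
    linarith
  have : 2 * Real.sinh R * Real.sinh δ ≤ Real.exp R * (2 * δ) :=
    mul_le_mul hR2 hs hs0 (Real.exp_pos _).le
  rw [abs_le]
  constructor <;> linarith

/-- A polynomial of degree at least two with positive leading coefficient dominates a positive
multiple of `x²` at infinity. -/
lemma exists_sq_le_eval (P : Polynomial ℝ) (hdeg : 2 ≤ P.natDegree) (hlead : 0 < P.leadingCoeff) :
    ∃ c > 0, ∃ X : ℝ, ∀ x ≥ X, c * x ^ 2 ≤ P.eval x := by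
  have hP : P ≠ 0 := by rintro rfl; simp at hdeg
  have hd : (Polynomial.X ^ 2 : Polynomial ℝ).degree ≤ P.degree := by
    rw [Polynomial.degree_X_pow, Polynomial.degree_eq_natDegree hP]
    exact_mod_cast hdeg
  obtain ⟨C, hC, h⟩ := (Polynomial.isBigO_atTop_of_degree_le _ _ hd).exists_pos
  have ht : Filter.Tendsto (fun x => P.eval x) Filter.atTop Filter.atTop :=
    P.tendsto_atTop_of_leadingCoeff_nonneg
      (Polynomial.natDegree_pos_iff_degree_pos.mp (by omega)) hlead.le
  obtain ⟨X, hX⟩ := Filter.eventually_atTop.mp (h.bound.and (ht.eventually_ge_atTop 0))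
  refine ⟨C⁻¹, inv_pos.mpr hC, X, fun x hx => ?_⟩
  obtain ⟨h1, h2⟩ := hX x hx
  simp only [Polynomial.eval_pow, Polynomial.eval_X, Real.norm_eq_abs, abs_of_nonneg h2,
    abs_of_nonneg (sq_nonneg x)] at h1
  rw [inv_mul_le_iff₀ hC]
  exact h1

lemma exists_abs_eval_cosh_le (P : Polynomial ℝ) :
    ∃ C, 0 ≤ C ∧ ∀ x : ℝ, |x| ≤ 2 → |P.eval (Real.cosh x)| ≤ C := by
  have hc : Continuous fun x : ℝ => P.eval (Real.cosh x) := by fun_prop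
  obtain ⟨C, hC⟩ := (isCompact_Icc (a := (-2 : ℝ)) (b := 2)).exists_bound_of_continuousOn
    hc.continuousOn
  refine ⟨C, (norm_nonneg _).trans (hC 0 (by norm_num)), fun x hx => hC x ?_⟩
  exact abs_le.mp hx

/-- For `x = e^R`, the negative term `b x⁴` beats `a x²` even after the loss of a factor `x`. -/
lemma eventually_cubic_le (a b ε M : ℝ) (hb : 0 < b) (hε : 0 < ε) :
    ∀ᶠ R : ℝ in Filter.atTop, a * Real.exp R ^ 2 - b * Real.exp R ^ 4 ≤ 0 ∧
      ε * (Real.exp R)⁻¹ * (a * Real.exp R ^ 2 - b * Real.exp R ^ 4) ≤ -M := by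
  have hx := Real.tendsto_exp_atTop
  filter_upwards [hx.eventually_ge_atTop 1, hx.eventually_ge_atTop ((|a| + |M| / ε) / b)]
    with R h1 h2
  set x := Real.exp R
  rw [div_le_iff₀ hb] at h2
  have hx0 : 0 < x := by linarith
  have key : a * x - b * x ^ 3 ≤ - (|M| / ε) := by
    have h3 : (|a| + |M| / ε) * x ≤ b * x ^ 3 := by
      calc (|a| + |M| / ε) * x ≤ (x * b) * x := by gcongr
        _ = b * x ^ 2 := by ring
        _ ≤ b * x ^ 3 := by gcongr; norm_num
    have h4 : a * x ≤ |a| * x := by gcongr; exact le_abs_self a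
    have h5 : |M| / ε ≤ |M| / ε * x := le_mul_of_one_le_right (by positivity) h1
    nlinarith
  have h0 : 0 ≤ |M| / ε := by positivity
  constructor
  · have : a * x ^ 2 - b * x ^ 4 = x * (a * x - b * x ^ 3) := by ring
    rw [this]
    exact mul_nonpos_of_nonneg_of_nonpos hx0.le (by linarith)
  · have : ε * x⁻¹ * (a * x ^ 2 - b * x ^ 4) = ε * (a * x - b * x ^ 3) := by field_simp
    rw [this]
    calc ε * (a * x - b * x ^ 3) ≤ ε * (-(|M| / ε)) := by gcongr
      _ = -|M| := by field_simp
      _ ≤ -M := by linarith [le_abs_self M]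

/-! ### Wave packets at opposite rapidities -/

/-- A normalized antisymmetric pair of bumps of radius `δ` around `±R`, of mass at least
`√δ/2` each. -/
lemma exists_bump_pair {R δ : ℝ} (hδ : 0 < δ) (hδR : δ < R) :
    ∃ p q : ℝ → ℝ, ContDiff ℝ (⊤ : ℕ∞) p ∧ ContDiff ℝ (⊤ : ℕ∞) q ∧
      HasCompactSupport p ∧ HasCompactSupport q ∧ (∀ x, 0 ≤ p x) ∧ (∀ x, 0 ≤ q x) ∧
      (∫ x, q x = ∫ x, p x) ∧ (∀ x, p x ≠ 0 → |x - R| < δ) ∧ (∀ x, q x ≠ 0 → |x + R| < δ) ∧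
      (∫ x, (p x - q x) ^ 2 = 1) ∧ δ / 4 ≤ (∫ x, p x) ^ 2 := by
  let f : ContDiffBump (0 : ℝ) := ⟨δ / 2, δ, by linarith, by linarith⟩
  have hf : ContDiff ℝ (⊤ : ℕ∞) f := f.contDiff
  have hfs : ∀ x, f x ≠ 0 → |x| < δ := by
    intro x hx
    have : x ∈ Function.support f := hx
    rw [f.support_eq] at this
    simpa using this
  have hfI : Integrable f := f.continuous.integrable_of_hasCompactSupport f.hasCompactSupport
  have hI : δ ≤ ∫ x, f x := by
    have := f.measure_closedBall_le_integral volume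
    rw [Real.volume_real_closedBall (by linarith [f.rIn_pos])] at this
    have h2 : f.rIn = δ / 2 := rfl
    rw [h2] at this
    linarith
  have hsqI : Integrable fun x => f x ^ 2 := by
    refine Continuous.integrable_of_hasCompactSupport (f.continuous.pow 2) ?_
    exact f.hasCompactSupport.comp_left (g := fun y : ℝ => y ^ 2) (by norm_num)
  have hsq : ∫ x, f x ^ 2 ≤ 2 * δ := by
    have h1 : ∫ x, f x ^ 2 ≤ ∫ x, f x := integral_mono hsqI hfI fun x => by
      have := f.nonneg (x := x)
      have := f.le_one (x := x)
      simp only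
      nlinarith
    have h2 := f.integral_le_measure_closedBall volume
    rw [Real.volume_real_closedBall (by linarith [f.rOut_pos])] at h2
    have h3 : f.rOut = δ := rfl
    rw [h3] at h2
    linarith
  have hsq0 : 0 < ∫ x, f x ^ 2 := by
    refine integral_pos_of_integrable_nonneg_nonzero (x := 0) (f.continuous.pow 2) hsqI
      (fun x => sq_nonneg _) ?_
    have : f 0 = 1 := f.one_of_mem_closedBall (by simpa using f.rIn_pos.le)
    simp [this]
  set N : ℝ := 2 * ∫ x, f x ^ 2 with hN
  have hN0 : 0 < N := by positivity
  set s : ℝ := (√N)⁻¹ with hs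
  have hs0 : 0 < s := by positivity
  have hs2 : s ^ 2 = N⁻¹ := by rw [hs, inv_pow, Real.sq_sqrt hN0.le]
  have hp : ∀ x, s * f (x - R) ≠ 0 → |x - R| < δ := fun x hx =>
    hfs _ (right_ne_zero_of_mul hx)
  have hq : ∀ x, s * f (x + R) ≠ 0 → |x + R| < δ := fun x hx =>
    hfs _ (right_ne_zero_of_mul hx)
  refine ⟨fun x => s * f (x - R), fun x => s * f (x + R), by fun_prop, by fun_prop, ?_, ?_,
    fun x => mul_nonneg hs0.le f.nonneg, fun x => mul_nonneg hs0.le f.nonneg, ?_, hp, hq, ?_, ?_⟩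
  · refine HasCompactSupport.intro (isCompact_closedBall R δ) fun x hx => ?_
    by_contra h
    exact hx (by simpa [Real.dist_eq] using (hp x h).le)
  · refine HasCompactSupport.intro (isCompact_closedBall (-R) δ) fun x hx => ?_
    by_contra h
    exact hx (by simpa [Real.dist_eq] using (hq x h).le)
  · rw [integral_const_mul, integral_const_mul, integral_sub_right_eq_self (fun x => f x),
      integral_add_right_eq_self (fun x => f x)]
  · have hdisj : ∀ x, (s * f (x - R) - s * f (x + R)) ^ 2
        = s ^ 2 * f (x - R) ^ 2 + s ^ 2 * f (x + R) ^ 2 := by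
      intro x
      -- the two bumps have disjoint supports
      have : f (x - R) * f (x + R) = 0 := by
        by_contra h
        have h1 := abs_lt.mp (hfs _ (left_ne_zero_of_mul h))
        have h2 := abs_lt.mp (hfs _ (right_ne_zero_of_mul h))
        linarith [h1.1, h2.2]
      linear_combination (-2 * s ^ 2) * this
    simp_rw [hdisj]
    rw [integral_add ((hsqI.comp_sub_right R).const_mul _) ((hsqI.comp_add_right R).const_mul _),
      integral_const_mul, integral_const_mul, integral_sub_right_eq_self (fun x => f x ^ 2),
      integral_add_right_eq_self (fun x => f x ^ 2), hs2]
    field_simp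
    rw [hN]; ring
  · rw [integral_const_mul, integral_sub_right_eq_self (fun x => f x), mul_pow, hs2]
    have hN4 : N ≤ 4 * δ := by linarith
    calc δ / 4 = (4 * δ)⁻¹ * δ ^ 2 := by field_simp
      _ ≤ N⁻¹ * (∫ x, f x) ^ 2 := by gcongr

/-! ### States of arbitrarily negative energy density -/

/-- The form is unbounded below on normalized states: the pair of bumps at `±R` works for `R`
large enough, depending on `M`. -/
lemma exists_state_le (μ : ℝ) (hμ : 0 < μ)
    (P : Polynomial ℝ) (hdeg : 2 ≤ P.natDegree) (hlead : 0 < P.leadingCoeff)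
    (g : SchwartzMap ℝ ℝ) (hg : ⇑g ≠ 0) (M : ℝ) :
    ∃ φ : ℝ → ℂ, (ContDiff ℝ (⊤ : ℕ∞) φ ∧ HasCompactSupport φ ∧ (∫ θ : ℝ, ‖φ θ‖ ^ 2) = 1) ∧
      (Qform μ (fun θ : ℝ => P.eval (Real.cosh θ)) (⇑g) φ).re ≤ -M := by
  set G₀ : ℝ := ∫ t, g t ^ 2 with hG₀
  have hG₀pos : 0 < G₀ := fourierG_zero_pos g hg
  obtain ⟨κ, hκ, hκG⟩ := exists_re_fourierG_ge g hg
  obtain ⟨c, hc, X, hX⟩ := exists_sq_le_eval P hdeg hlead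
  obtain ⟨C, hC, hCP⟩ := exists_abs_eval_cosh_le P
  -- `δ = ε e^{-R}` below makes the energy spread `2 μ ε` smaller than `κ`
  set ε : ℝ := min 1 (κ / (4 * μ)) with hε
  have hε0 : 0 < ε := by positivity
  have hε1 : ε ≤ 1 := min_le_left _ _
  have hεκ : 4 * μ * ε ≤ κ := by
    have := min_le_right 1 (κ / (4 * μ))
    rw [← hε, le_div_iff₀ (by positivity)] at this
    linarith
  set E2 : ℝ := Real.exp 2 with hE2
  set a : ℝ := C * G₀ * E2 with ha
  set b : ℝ := c * (G₀ / 2) * (E2⁻¹ / 4 * E2⁻¹) with hb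
  have hb0 : 0 < b := by positivity
  set pre : ℝ := μ ^ 2 / (2 * Real.pi) with hpre
  have hpre0 : 0 < pre := by have := Real.pi_pos; positivity
  have hcosh : ∀ᶠ R : ℝ in Filter.atTop, X ≤ E2⁻¹ / 2 * Real.exp R ^ 2 :=
    (((Filter.tendsto_pow_atTop two_ne_zero).comp Real.tendsto_exp_atTop).const_mul_atTop
      (by positivity)).eventually_ge_atTop X
  obtain ⟨R, ⟨hneg, hfin⟩, hRX, hR2⟩ :=
    ((eventually_cubic_le a b (pre * ε / 2) M hb0 (by positivity)).and
      (hcosh.and (Filter.eventually_ge_atTop 2))).exists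
  set x : ℝ := Real.exp R with hx
  have hx0 : 0 < x := Real.exp_pos R
  have hx1 : 1 ≤ x := Real.one_le_exp (by linarith)
  set δ : ℝ := ε * x⁻¹ with hδ
  have hδ0 : 0 < δ := by positivity
  have hδ1 : δ ≤ 1 := by
    calc δ ≤ 1 * 1 := by
          rw [hδ]; gcongr; exact inv_le_one_of_one_le₀ hx1
      _ = 1 := one_mul 1
  obtain ⟨p, q, hpC, hqC, hpS, hqS, hp0, hq0, hpq, hp, hq, hnorm, hmass⟩ :=
    exists_bump_pair hδ0 (show δ < R by linarith)
  set F : ℝ → ℝ := fun θ => P.eval (Real.cosh θ) with hF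
  have hFc : Continuous F := by rw [hF]; fun_prop
  set K : ℝ × ℝ → ℝ := fun z => Real.cosh ((z.1 + z.2) / 2) ^ 2 * F (z.1 - z.2) *
        (fourierG g (μ * Real.cosh z.1 - μ * Real.cosh z.2)).re with hK
  have hKc : Continuous K := by
    have := continuous_fourierG g
    rw [hK]; fun_prop
  have hpa : ∀ y, p y ≠ 0 → R - δ ≤ y ∧ y ≤ R + δ := fun y hy => by
    have := abs_lt.mp (hp y hy); constructor <;> linarith [this.1, this.2]
  have hqa : ∀ y, q y ≠ 0 → -R - δ ≤ y ∧ y ≤ -R + δ := fun y hy => by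
    have := abs_lt.mp (hq y hy); constructor <;> linarith [this.1, this.2]
  have hsame : ∀ y z, |y| ≤ R + δ → |z| ≤ R + δ → |y - z| ≤ 2 → K (y, z) ≤ a * x ^ 2 := by
    intro y z hy hz hyz
    have h1 : Real.cosh ((y + z) / 2) ^ 2 ≤ E2 * x ^ 2 := by
      have h2 : Real.cosh ((y + z) / 2) ≤ Real.exp (R + 1) := by
        have h3 : Real.cosh ((y + z) / 2) ≤ Real.exp |(y + z) / 2| := by
          rw [← Real.cosh_abs, Real.cosh_eq]
          have : Real.exp (-|(y + z) / 2|) ≤ Real.exp |(y + z) / 2| :=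
            Real.exp_le_exp.mpr (by linarith [abs_nonneg ((y + z) / 2)])
          linarith
        refine h3.trans (Real.exp_le_exp.mpr ?_)
        have := abs_le.mp hy
        have := abs_le.mp hz
        rw [abs_le]; constructor <;> linarith
      calc Real.cosh ((y + z) / 2) ^ 2 ≤ Real.exp (R + 1) ^ 2 :=
            pow_le_pow_left₀ (Real.cosh_pos _).le h2 2
        _ = E2 * x ^ 2 := by
            rw [hE2, hx, ← Real.exp_nat_mul, ← Real.exp_nat_mul, ← Real.exp_add]
            congr 1; push_cast; ring
    have h4 : F (y - z) * (fourierG g (μ * Real.cosh y - μ * Real.cosh z)).re ≤ C * G₀ := by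
      refine (le_abs_self _).trans ?_
      rw [abs_mul]
      exact mul_le_mul (hCP _ hyz) ((Complex.abs_re_le_norm _).trans (norm_fourierG_le g _))
        (abs_nonneg _) hC
    calc K (y, z) = Real.cosh ((y + z) / 2) ^ 2 *
          (F (y - z) * (fourierG g (μ * Real.cosh y - μ * Real.cosh z)).re) := by
            simp only [hK]; ring
      _ ≤ Real.cosh ((y + z) / 2) ^ 2 * (C * G₀) := by gcongr
      _ ≤ (E2 * x ^ 2) * (C * G₀) := by gcongr
      _ = a * x ^ 2 := by rw [ha]; ring
  have hopp : ∀ y z, R - δ ≤ |y| → |y| ≤ R + δ → R - δ ≤ |z| → |z| ≤ R + δ →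
      2 * R - 2 ≤ |y - z| → b * x ^ 4 ≤ K (y, z) := by
    intro y z hy1 hy2 hz1 hz2 hyz
    have h1 : G₀ / 2 ≤ (fourierG g (μ * Real.cosh y - μ * Real.cosh z)).re := by
      apply hκG
      rw [← mul_sub, abs_mul, abs_of_pos hμ]
      have := abs_cosh_sub_cosh_le hδ0 hδ1 (by linarith) hy1 hy2 hz1 hz2
      calc μ * |Real.cosh y - Real.cosh z| ≤ μ * (2 * Real.exp R * δ) := by gcongr
        _ = 2 * μ * ε := by rw [hδ, ← hx]; field_simp
        _ < 4 * μ * ε := by nlinarith [mul_pos hμ hε0]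
        _ ≤ κ := hεκ
    have h2 : E2⁻¹ / 2 * x ^ 2 ≤ Real.cosh (y - z) := by
      rw [← Real.cosh_abs, Real.cosh_eq]
      have h3 : Real.exp (2 * R - 2) ≤ Real.exp |y - z| := Real.exp_le_exp.mpr hyz
      have h4 : Real.exp (2 * R - 2) = E2⁻¹ * x ^ 2 := by
        rw [hE2, hx, ← Real.exp_nat_mul, ← Real.exp_neg, ← Real.exp_add]
        congr 1; push_cast; ring
      have := Real.exp_pos (-|y - z|)
      rw [h4] at h3
      linarith
    have h5 : X ≤ Real.cosh (y - z) := hRX.trans h2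
    have h6 : c * (E2⁻¹ / 2 * x ^ 2) ^ 2 ≤ F (y - z) := by
      refine le_trans ?_ (hX _ h5)
      gcongr
    have h7 : 1 ≤ Real.cosh ((y + z) / 2) ^ 2 := one_le_pow₀ (Real.one_le_cosh _)
    calc b * x ^ 4 = 1 * (c * (E2⁻¹ / 2 * x ^ 2) ^ 2) * (G₀ / 2) := by rw [hb]; ring
      _ ≤ K (y, z) := by
        simp only [hK]
        have : 0 ≤ c * (E2⁻¹ / 2 * x ^ 2) ^ 2 := by positivity
        gcongr
        exact mul_nonneg (sq_nonneg _) (this.trans h6)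
  have hkernel := integral_kernel_le (A := a * x ^ 2) (B := b * x ^ 4) hKc hpC.continuous
    hqC.continuous hpS hqS hp0 hq0 hpq
    (fun y z hy hz => by
      have h1 := hpa y hy
      have h2 := hpa z hz
      apply hsame <;> rw [abs_le] <;> constructor <;> linarith)
    (fun y z hy hz => by
      have h1 := hqa y hy
      have h2 := hqa z hz
      apply hsame <;> rw [abs_le] <;> constructor <;> linarith)
    (fun y z hy hz => by
      have h1 := hpa y hy
      have h2 := hqa z hz
      have h3 : |z| = -z := abs_of_nonpos (by linarith)
      have h4 : |y| = y := abs_of_nonneg (by linarith)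
      apply hopp y z (by linarith) (by linarith) (by linarith) (by linarith)
      exact le_trans (by linarith) (le_abs_self _))
    (fun y z hy hz => by
      have h1 := hqa y hy
      have h2 := hpa z hz
      have h3 : |y| = -y := abs_of_nonpos (by linarith)
      have h4 : |z| = z := abs_of_nonneg (by linarith)
      apply hopp y z (by linarith) (by linarith) (by linarith) (by linarith)
      rw [abs_sub_comm]
      exact le_trans (by linarith) (le_abs_self _))
  have huC : ContDiff ℝ (⊤ : ℕ∞) fun θ => p θ - q θ := hpC.sub hqC
  have huS : HasCompactSupport fun θ => p θ - q θ := hpS.sub hqS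
  refine ⟨fun θ => ((p θ - q θ : ℝ) : ℂ), ⟨?_, ?_, ?_⟩, ?_⟩
  · exact Complex.ofRealCLM.contDiff.comp huC
  · exact huS.comp_left (g := fun r : ℝ => (r : ℂ)) Complex.ofReal_zero
  · rw [← hnorm]
    congr 1
    ext θ
    rw [Complex.norm_real, Real.norm_eq_abs, sq_abs]
  · rw [Qform_re μ hFc g huC.continuous huS]
    calc pre * ∫ z : ℝ × ℝ, K z * (p z.1 - q z.1) * (p z.2 - q z.2)
        ≤ pre * (2 * (∫ y, p y) ^ 2 * (a * x ^ 2 - b * x ^ 4)) := by gcongr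
      _ ≤ pre * (2 * (δ / 4) * (a * x ^ 2 - b * x ^ 4)) := by
          have : 2 * (δ / 4) ≤ 2 * (∫ y, p y) ^ 2 := by linarith
          have := mul_le_mul_of_nonpos_right this hneg
          gcongr
      _ = pre * ε / 2 * x⁻¹ * (a * x ^ 2 - b * x ^ 4) := by rw [hδ]; ring
      _ ≤ -M := hfin

/-- No QEI for the free field with polynomial factor of degree at least 2:
with `F_P(θ) = P(cosh θ)`, `deg P ≥ 2`, positive leading coefficient, for every nonzero
real Schwartz `g` there are normalized smooth compactly supported states with energy
density expectation tending to `−∞`. -/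
theorem free_field_no_QEI_high_degree
    (μ : ℝ) (hμ : 0 < μ)
    (P : Polynomial ℝ) (hdeg : 2 ≤ P.natDegree) (hlead : 0 < P.leadingCoeff)
    (g : SchwartzMap ℝ ℝ) (hg : ⇑g ≠ 0) :
    ∃ φ : ℕ → ℝ → ℂ,
      (∀ j, ContDiff ℝ (⊤ : ℕ∞) (φ j) ∧ HasCompactSupport (φ j) ∧
        (∫ θ : ℝ, ‖φ j θ‖ ^ 2) = 1) ∧
      Filter.Tendsto
        (fun j => (Qform μ (fun θ : ℝ => P.eval (Real.cosh θ)) (⇑g) (φ j)).re)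
        Filter.atTop Filter.atBot := by
  choose φ hφ hQ using fun j : ℕ => exists_state_le μ hμ P hdeg hlead g hg j
  exact ⟨φ, hφ, Filter.tendsto_atBot_mono hQ
    (Filter.tendsto_neg_atTop_atBot.comp tendsto_natCast_atTop_atTop)⟩
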